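/- arXiv:2106.08896 — 2 statements merged into one kernel-verified Lean document; each statement's English description precedes it below -/
import Mathlib

section
/- Let C be a monoidal category and u : U ⟶ I a morphism such that m := λ_U ∘ (u ⊗ 𝟙_U) equals ρ_U ∘ (𝟙_U ⊗ u) and is invertible (a left idempotent satisfying the central equation). Then the endofunctor (– ⊗ U) : C ⥤ C carries a comonad structure with counit at A given by ρ_A ∘ (𝟙_A ⊗ u) : A ⊗ U ⟶ A and comultiplication at A given by α⁻¹_{A,U,U} ∘ (𝟙_A ⊗ m⁻¹) : A ⊗ U ⟶ (A ⊗ U) ⊗ U: these data are natural and satisfy the counit laws and coassociativity. Moreover this comonad is idempotent, since the comultiplication is a natural isomorphism. -/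
open CategoryTheory MonoidalCategory

/-- Let `u : U ⟶ I` satisfy the central equation, with `m := λ_U ∘ (u ⊗ 𝟙_U)` invertible.
Then the endofunctor `– ⊗ U` carries a comonad structure: the counit `ρ_A ∘ (𝟙_A ⊗ u)` and
comultiplication `α⁻¹ ∘ (𝟙_A ⊗ m⁻¹)` are natural, satisfy the two counit laws and
coassociativity; moreover this comonad is idempotent, the comultiplication being a natural
isomorphism. -/
theorem stmt9 {C : Type*} [Category C] [MonoidalCategory C]
    {U : C} (u : U ⟶ 𝟙_ C)
    (hcentral : (u ▷ U) ≫ (λ_ U).hom = (U ◁ u) ≫ (ρ_ U).hom)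
    [IsIso ((u ▷ U) ≫ (λ_ U).hom)] :
    -- naturality of the counit
    (∀ {A B : C} (f : A ⟶ B),
      (f ▷ U) ≫ ((B ◁ u) ≫ (ρ_ B).hom) = ((A ◁ u) ≫ (ρ_ A).hom) ≫ f) ∧
    -- naturality of the comultiplication
    (∀ {A B : C} (f : A ⟶ B),
      (f ▷ U) ≫ ((B ◁ inv ((u ▷ U) ≫ (λ_ U).hom)) ≫ (α_ B U U).inv) =
        ((A ◁ inv ((u ▷ U) ≫ (λ_ U).hom)) ≫ (α_ A U U).inv) ≫ ((f ▷ U) ▷ U)) ∧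
    -- first counit law
    (∀ A : C,
      ((A ◁ inv ((u ▷ U) ≫ (λ_ U).hom)) ≫ (α_ A U U).inv) ≫
        (((A ⊗ U) ◁ u) ≫ (ρ_ (A ⊗ U)).hom) = 𝟙 (A ⊗ U)) ∧
    -- second counit law
    (∀ A : C,
      ((A ◁ inv ((u ▷ U) ≫ (λ_ U).hom)) ≫ (α_ A U U).inv) ≫
        (((A ◁ u) ≫ (ρ_ A).hom) ▷ U) = 𝟙 (A ⊗ U)) ∧
    -- coassociativity
    (∀ A : C,
      ((A ◁ inv ((u ▷ U) ≫ (λ_ U).hom)) ≫ (α_ A U U).inv) ≫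
        (((A ⊗ U) ◁ inv ((u ▷ U) ≫ (λ_ U).hom)) ≫ (α_ (A ⊗ U) U U).inv) =
      ((A ◁ inv ((u ▷ U) ≫ (λ_ U).hom)) ≫ (α_ A U U).inv) ≫
        (((A ◁ inv ((u ▷ U) ≫ (λ_ U).hom)) ≫ (α_ A U U).inv) ▷ U)) ∧
    -- the comonad is idempotent: the comultiplication is a (natural) isomorphism
    (∀ A : C, IsIso ((A ◁ inv ((u ▷ U) ≫ (λ_ U).hom)) ≫ (α_ A U U).inv)) := by
  have h1 : ∀ A : C,
      ((A ◁ inv ((u ▷ U) ≫ (λ_ U).hom)) ≫ (α_ A U U).inv) ≫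
        (((A ⊗ U) ◁ u) ≫ (ρ_ (A ⊗ U)).hom) = 𝟙 (A ⊗ U) := by
    intro A
    have e : (α_ A U U).inv ≫ (((A ⊗ U) ◁ u) ≫ (ρ_ (A ⊗ U)).hom) =
        A ◁ ((u ▷ U) ≫ (λ_ U).hom) := by
      rw [hcentral]; simp
    rw [Category.assoc, e, ← MonoidalCategory.whiskerLeft_comp, IsIso.inv_hom_id,
      MonoidalCategory.whiskerLeft_id]
  have h2 : ∀ A : C,
      ((A ◁ inv ((u ▷ U) ≫ (λ_ U).hom)) ≫ (α_ A U U).inv) ≫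
        (((A ◁ u) ≫ (ρ_ A).hom) ▷ U) = 𝟙 (A ⊗ U) := by
    intro A
    have e : (α_ A U U).inv ≫ (((A ◁ u) ≫ (ρ_ A).hom) ▷ U) =
        A ◁ ((u ▷ U) ≫ (λ_ U).hom) := by
      simp
    rw [Category.assoc, e, ← MonoidalCategory.whiskerLeft_comp, IsIso.inv_hom_id,
      MonoidalCategory.whiskerLeft_id]
  have h3 : ∀ A : C, IsIso ((A ◁ inv ((u ▷ U) ≫ (λ_ U).hom)) ≫ (α_ A U U).inv) :=
    fun A => inferInstance
  refine ⟨?_, ?_, h1, h2, ?_, h3⟩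
  · intro A B f
    rw [← whisker_exchange_assoc]; simp
  · intro A B f
    rw [← whisker_exchange_assoc]; simp
  · intro A
    congr 1
    -- both sides are sections of the isomorphism `ε_{A ⊗ U} ▷ U`
    have a := h2 (A ⊗ U)
    have b := congrArg (fun f => f ▷ U) (h1 A)
    simp only [MonoidalCategory.comp_whiskerRight _ (((A ⊗ U) ◁ u) ≫ (ρ_ (A ⊗ U)).hom),
      MonoidalCategory.id_whiskerRight] at b
    have := h3 (A ⊗ U)
    have hi : IsIso ((((A ⊗ U) ◁ u) ≫ (ρ_ (A ⊗ U)).hom) ▷ U) := by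
      rw [← IsIso.inv_eq_of_hom_inv_id a]; infer_instance
    rw [← cancel_mono ((((A ⊗ U) ◁ u) ≫ (ρ_ (A ⊗ U)).hom) ▷ U)]
    exact a.trans b.symm
end

section
/- Every cartesian monoidal category is bilinear: if C is a cartesian monoidal category, u : U ⟶ ⊤ is a central idempotent (equivalently, U is subterminal), and f, g : A ⟶ B × U are morphisms with f × 𝟙_U = g × 𝟙_U : A × U ⟶ (B × U) × U, then f = g. -/
open CategoryTheory Limits

/-- Every cartesian monoidal category is bilinear: if `U` is the domain of a central
idempotent (equivalently, `U` is subterminal, i.e. the unique morphism `U ⟶ ⊤` is a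
monomorphism) and `f, g : A ⟶ B × U` satisfy `f × 𝟙_U = g × 𝟙_U`, then `f = g`. -/
theorem stmt14 {C : Type*} [Category C] [HasTerminal C] [HasBinaryProducts C]
    (U : C) (hU : Mono (terminal.from U))
    {A B : C} (f g : A ⟶ B ⨯ U)
    (h : prod.map f (𝟙 U) = prod.map g (𝟙 U)) : f = g := by
  have h' := congrArg (fun k => prod.lift (𝟙 A) (f ≫ prod.snd) ≫ k ≫ prod.fst) h
  simpa only [prod.map_fst, ← Category.assoc, prod.lift_fst, Category.id_comp, prod.lift_map, Category.comp_id] using h'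
end
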